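/- arXiv:math/0206158 — 9 statements merged into one kernel-verified Lean document; each statement's English description precedes it below -/
import Mathlib

section
/- Let $d$ be a positive integer with $d \equiv 1 \pmod 8$. Then there exist odd integers $x, y$ satisfying $x^2 - d y^2 = 16$ and ($x \equiv 4 \pmod d$ or $x \equiv -4 \pmod d$) if and only if there exist integers $a, b$ with $a^2 - d b^2 = 8$ or $a^2 - d b^2 = -8$. -/
/-!
If `x = c + d k`, then `x² - d y² = c²` becomes `k (d k + 2 c) = y²`. For `c` even and coprime to
`x` the two factors are coprime, so up to a common sign they are squares `b²` and `a²`, and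
`a² - d b² = ± 2 c`. Conversely, `a² - d b² = 2 c` gives the solution `(a² - c, a b)`. Here
`c = ± 4`, and since `m² - d n²` is never `2` modulo `4` for
`d ≡ 1 (mod 4)`, both `a` and `b` are odd.
-/

theorem exists_sq_or_neg_sq_of_isCoprime_of_mul_eq_sq {m n y : ℤ} (hmn : IsCoprime m n)
    (h : m * n = y ^ 2) :
    ∃ a b : ℤ, m = a ^ 2 ∧ n = b ^ 2 ∨ m = -a ^ 2 ∧ n = -b ^ 2 := by
  obtain ⟨a, ha⟩ := Int.sq_of_isCoprime hmn h
  obtain ⟨b, hb⟩ := Int.sq_of_isCoprime hmn.symm ((mul_comm n m).trans h)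
  refine ⟨a, b, ?_⟩
  have eq_zero_of_opposite_signs (hneg : m * n = -(a * b) ^ 2) : a = 0 ∨ b = 0 := by
    have hab : (a * b) ^ 2 = 0 := by linarith [sq_nonneg (a * b), sq_nonneg y]
    simpa using hab
  rcases ha with ha | ha <;> rcases hb with hb | hb
  · exact .inl ⟨ha, hb⟩
  · rcases eq_zero_of_opposite_signs (by rw [ha, hb]; ring) with rfl | rfl
    · exact .inr ⟨by simpa using ha, hb⟩
    · exact .inl ⟨ha, by simpa using hb⟩
  · rcases eq_zero_of_opposite_signs (by rw [ha, hb]; ring) with rfl | rfl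
    · exact .inl ⟨by simpa using ha, hb⟩
    · exact .inr ⟨ha, by simpa using hb⟩
  · exact .inr ⟨ha, hb⟩

theorem exists_sq_sub_mul_sq_eq_two_mul_or_neg {d c x y : ℤ} (hd : d ≠ 0) (hc : Even c)
    (hxc : IsCoprime x c) (hmod : x ≡ c [ZMOD d]) (h : x ^ 2 - d * y ^ 2 = c ^ 2) :
    ∃ a b : ℤ, a ^ 2 - d * b ^ 2 = 2 * c ∨ a ^ 2 - d * b ^ 2 = -(2 * c) := by
  obtain ⟨k, hk⟩ := hmod.symm.dvd
  obtain rfl : x = d * k + c := by linarith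
  have factorization : k * (d * k + 2 * c) = y ^ 2 :=
    mul_left_cancel₀ hd (by linear_combination h)
  have hkc : IsCoprime k c :=
    (IsCoprime.of_add_mul_left_left (z := 1) (by rwa [mul_one])).of_mul_left_right
  have hk2c : IsCoprime k (2 * c) :=
    (hkc.of_isCoprime_of_dvd_right hc.two_dvd).mul_right hkc
  have coprime_factors : IsCoprime k (d * k + 2 * c) := hk2c.mul_add_right_right d
  obtain ⟨b, a, ⟨hb, ha⟩ | ⟨hb, ha⟩⟩ :=
    exists_sq_or_neg_sq_of_isCoprime_of_mul_eq_sq coprime_factors factorization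
  · exact ⟨a, b, .inl (by linear_combination d * hb - ha)⟩
  · exact ⟨a, b, .inr (by linear_combination ha - d * hb)⟩

theorem exists_odd_sq_sub_mul_sq_eq_sq {d c a b : ℤ} (hc : Even c) (ha : Odd a) (hb : Odd b)
    (h : a ^ 2 - d * b ^ 2 = 2 * c) :
    ∃ x y : ℤ, Odd x ∧ Odd y ∧ x ^ 2 - d * y ^ 2 = c ^ 2 ∧ x ≡ c [ZMOD d] := by
  refine ⟨a ^ 2 - c, a * b, ha.pow.sub_even hc, ha.mul hb, ?_, ?_⟩
  · linear_combination a ^ 2 * h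
  · exact (Int.modEq_of_dvd ⟨b ^ 2, by linear_combination h⟩ : c ≡ a ^ 2 - c [ZMOD d]).symm

theorem not_sq_sub_mul_sq_modEq_two {d : ℤ} (hd : d ≡ 1 [ZMOD 4]) (m n : ℤ) :
    ¬ m ^ 2 - d * n ^ 2 ≡ 2 [ZMOD 4] := by
  have hd' : (d : ZMod 4) = 1 := by exact_mod_cast (ZMod.intCast_eq_intCast_iff d 1 4).mpr hd
  have squares_mod_four : ∀ u v : ZMod 4, u ^ 2 - v ^ 2 ≠ 2 := by decide
  intro h
  have h' := (ZMod.intCast_eq_intCast_iff _ _ 4).mpr h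
  push_cast [hd', one_mul] at h'
  exact squares_mod_four m n h'

theorem odd_and_odd_of_sq_sub_mul_sq_modEq_eight {d a b : ℤ} (hd : d ≡ 1 [ZMOD 4])
    (h : a ^ 2 - d * b ^ 2 ≡ 8 [ZMOD 16]) : Odd a ∧ Odd b := by
  have hd_odd : Odd d := by
    rw [Int.odd_iff]
    exact hd.of_dvd (by norm_num : (2 : ℤ) ∣ 4)
  have h_even : Even (a ^ 2 - d * b ^ 2) := by
    rw [Int.even_iff]
    exact h.of_dvd (by norm_num : (2 : ℤ) ∣ 16)
  have same_parity : Even a ↔ Even b := by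
    simpa [Int.even_sub, Int.even_mul, Int.even_pow, Int.not_even_iff_odd.mpr hd_odd] using h_even
  have not_even : ¬ Even a := by
    intro ha
    obtain ⟨m, rfl⟩ := ha.two_dvd
    obtain ⟨n, rfl⟩ := (same_parity.mp ha).two_dvd
    refine not_sq_sub_mul_sq_modEq_two hd m n (Int.ModEq.mul_left_cancel' (c := 4) (by simp) ?_)
    convert h using 1 <;> ring
  exact ⟨Int.not_even_iff_odd.mp not_even, Int.not_even_iff_odd.mp (mt same_parity.mpr not_even)⟩

theorem stmt_0_general {d : ℤ} (hd : d ≡ 1 [ZMOD 4]) :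
    (∃ x y : ℤ, Odd x ∧ Odd y ∧ x ^ 2 - d * y ^ 2 = 16 ∧
      (x ≡ 4 [ZMOD d] ∨ x ≡ -4 [ZMOD d])) ↔
    (∃ a b : ℤ, a ^ 2 - d * b ^ 2 = 8 ∨ a ^ 2 - d * b ^ 2 = -8) := by
  constructor
  · rintro ⟨x, y, hx, -, h, hmod⟩
    have hd0 : d ≠ 0 := by rintro rfl; exact absurd hd (by decide)
    have coprime_four : IsCoprime x 4 := (Int.isCoprime_two_right.mpr hx).pow_right (n := 2)
    rcases hmod with hmod | hmod
    · exact exists_sq_sub_mul_sq_eq_two_mul_or_neg hd0 (by decide) coprime_four hmod h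
    · obtain ⟨a, b, hab⟩ :=
        exists_sq_sub_mul_sq_eq_two_mul_or_neg hd0 (by decide) coprime_four.neg_right hmod h
      exact ⟨a, b, hab.symm⟩
  · rintro ⟨a, b, h⟩
    have norm_modEq : a ^ 2 - d * b ^ 2 ≡ 8 [ZMOD 16] := by
      rcases h with h | h <;> simp [h, Int.ModEq]
    obtain ⟨ha, hb⟩ := odd_and_odd_of_sq_sub_mul_sq_modEq_eight hd norm_modEq
    rcases h with h | h
    · obtain ⟨x, y, hx, hy, hxy, hmod⟩ :=
        exists_odd_sq_sub_mul_sq_eq_sq (c := 4) (by decide) ha hb h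
      exact ⟨x, y, hx, hy, hxy, .inl hmod⟩
    · obtain ⟨x, y, hx, hy, hxy, hmod⟩ :=
        exists_odd_sq_sub_mul_sq_eq_sq (c := -4) (by decide) ha hb (by simpa using h)
      exact ⟨x, y, hx, hy, hxy, .inr hmod⟩

/-- Arithmetic core of Theorem 3.1.7: for `d > 0`, `d ≡ 1 (mod 8)`, the equation
`x² - d y² = 16` has an odd solution with `x ≡ ±4 (mod d)` iff one of the equations
`a² - d b² = ±8` has an integral solution. -/
theorem stmt_0 (d : ℤ) (hd : 0 < d) (hd8 : d ≡ 1 [ZMOD 8]) :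
    (∃ x y : ℤ, Odd x ∧ Odd y ∧ x ^ 2 - d * y ^ 2 = 16 ∧
      (x ≡ 4 [ZMOD d] ∨ x ≡ -4 [ZMOD d])) ↔
    (∃ a b : ℤ, a ^ 2 - d * b ^ 2 = 8 ∨ a ^ 2 - d * b ^ 2 = -8) :=
  stmt_0_general (hd8.of_dvd (by norm_num))
end

section
/- Let $d$ be a positive integer with $d \equiv 1 \pmod 8$, and let $x, y$ be odd integers with $x^2 - d y^2 = 16$ and ($x \equiv 4 \pmod d$ or $x \equiv -4 \pmod d$). Then there exist odd integers $a, b$ and a sign $\epsilon \in \{1, -1\}$ such that either $a^2 - d b^2 = 8$, $x = \epsilon(a^2 - 4)$ and $y = \epsilon\, a b$, or $a^2 - d b^2 = -8$, $x = \epsilon(a^2 + 4)$ and $y = \epsilon\, a b$. -/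
/-!
Write `x² - d y² = c²` as `(x + c) (x - c) = d y²`. If `d` divides `x - c = d k`, then
`(x + c) k = y²` with coprime factors, so `x + c = u a²` and `k = u b²` for a common unit `u`;
subtracting gives `u (a² - d b²) = 2 c`. The congruence `x ≡ -c` is the same with `-c` for `c`.
-/

section GCDDomain

variable {R : Type*} [CommRing R] [IsDomain R] [GCDMonoid R]

theorem exists_eq_unit_mul_sq_of_mul_eq_sq {m k y : R} (hmk : IsRelPrime m k)
    (h : m * k = y ^ 2) :
    ∃ (a b : R) (u : Rˣ), m = u * a ^ 2 ∧ k = u * b ^ 2 ∧ y = u * (a * b) := by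
  obtain ⟨a, u, hm⟩ :=
    exists_associated_pow_of_mul_eq_pow (gcd_isUnit_iff_isRelPrime.2 hmk) h
  rcases eq_or_ne a 0 with rfl | ha
  · obtain rfl : m = 0 := by simpa using hm.symm
    obtain ⟨v, rfl⟩ : IsUnit k := isRelPrime_zero_left.1 hmk
    exact ⟨0, 1, v, by simp, by simp, by simpa using h.symm⟩
  · have ha_dvd : a ∣ y :=
      (IsIntegrallyClosed.pow_dvd_pow_iff two_ne_zero).1 ⟨u * k, by rw [← h, ← hm]; ring⟩
    obtain ⟨t, rfl⟩ := ha_dvd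
    have hk : u * k = t ^ 2 :=
      mul_left_cancel₀ (pow_ne_zero 2 ha) (by linear_combination h + k * hm)
    have hu : (u : R) * ↑u⁻¹ = 1 := u.mul_inv
    refine ⟨a, ↑u⁻¹ * t, u, by rw [← hm, mul_comm], ?_, ?_⟩
    · linear_combination (↑u⁻¹ : R) * hk - (k + (↑u⁻¹ : R) * t ^ 2) * hu
    · linear_combination -(a * t) * hu

theorem exists_unit_mul_sq_sub_mul_sq_eq_two_mul {c d x y : R} (hd : d ≠ 0)
    (hcop : IsRelPrime (x + c) (x - c)) (h : x ^ 2 - d * y ^ 2 = c ^ 2) (hdvd : d ∣ x - c) :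
    ∃ (a b : R) (u : Rˣ),
      u * (a ^ 2 - d * b ^ 2) = 2 * c ∧ x = u * a ^ 2 - c ∧ y = u * (a * b) := by
  obtain ⟨k, hk⟩ := hdvd
  have hprod : (x + c) * k = y ^ 2 :=
    mul_left_cancel₀ hd (by linear_combination h - (x + c) * hk)
  have hcop' : IsRelPrime (x + c) k := (hk ▸ hcop).of_mul_right_right
  obtain ⟨a, b, u, ha, hb, hy⟩ := exists_eq_unit_mul_sq_of_mul_eq_sq hcop' hprod
  exact ⟨a, b, u, by linear_combination hk - ha + d * hb, by linear_combination ha, hy⟩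

end GCDDomain

theorem isCoprime_add_sub_of_even {R : Type*} [CommRing R] {x c : R} (hc : Even c)
    (hxc : IsCoprime x c) : IsCoprime (x + c) (x - c) := by
  have hcop_c : IsCoprime (x + c) c := by simpa using hxc.add_mul_left_left 1
  have hcop_two : IsCoprime (x + c) 2 := hcop_c.of_isCoprime_of_dvd_right hc.two_dvd
  have hsub : x - c = -(2 * c) + (x + c) * 1 := by ring
  rw [hsub]
  exact (hcop_two.mul_right hcop_c).neg_right.add_mul_left_right 1

theorem stmt_3_general {c d x y : ℤ} (hd : d ≠ 0) (hcop : IsCoprime (x + c) (x - c))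
    (hxy : x ^ 2 - d * y ^ 2 = c ^ 2) (hcong : x ≡ c [ZMOD d] ∨ x ≡ -c [ZMOD d]) :
    ∃ a b ε : ℤ, (ε = 1 ∨ ε = -1) ∧
      ((a ^ 2 - d * b ^ 2 = 2 * c ∧ x = ε * (a ^ 2 - c) ∧ y = ε * (a * b)) ∨
       (a ^ 2 - d * b ^ 2 = -(2 * c) ∧ x = ε * (a ^ 2 + c) ∧ y = ε * (a * b))) := by
  wlog hc : x ≡ c [ZMOD d] generalizing c
  · have hc_neg : x ≡ -c [ZMOD d] := hcong.resolve_left hc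
    have hcop_neg : IsCoprime (x + -c) (x - -c) := by
      simpa only [← sub_eq_add_neg, sub_neg_eq_add] using hcop.symm
    obtain ⟨a, b, ε, hε, hab⟩ := this hcop_neg (by rwa [neg_sq]) (.inl hc_neg) hc_neg
    refine ⟨a, b, ε, hε, ?_⟩
    simpa only [mul_neg, neg_neg, sub_neg_eq_add, ← sub_eq_add_neg] using hab.symm
  obtain ⟨a, b, u, hab, hx, hy⟩ :=
    exists_unit_mul_sq_sub_mul_sq_eq_two_mul hd hcop.isRelPrime hxy hc.symm.dvd
  have hu : (u : ℤ) = 1 ∨ (u : ℤ) = -1 := Int.isUnit_iff.1 u.isUnit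
  refine ⟨a, b, u, hu, ?_⟩
  rcases hu with hu | hu <;> rw [hu] at hab hx hy ⊢
  · exact .inl ⟨by linarith, by linarith, hy⟩
  · exact .inr ⟨by linarith, by linarith, hy⟩

/-- Every odd solution `(x,y)` of `x² - d y² = 16` with `x ≡ ±4 (mod d)` is, up to an
overall sign, an associated solution (3.1.29) or (3.1.30) of a solution `(a,b)` of one
of the equations `a² - d b² = ±8`. -/
theorem stmt_3 (d : ℤ) (hd : 0 < d) (hd8 : d ≡ 1 [ZMOD 8]) (x y : ℤ)
    (hx : Odd x) (hy : Odd y) (hxy : x ^ 2 - d * y ^ 2 = 16)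
    (hcong : x ≡ 4 [ZMOD d] ∨ x ≡ -4 [ZMOD d]) :
    ∃ a b ε : ℤ, Odd a ∧ Odd b ∧ (ε = 1 ∨ ε = -1) ∧
      ((a ^ 2 - d * b ^ 2 = 8 ∧ x = ε * (a ^ 2 - 4) ∧ y = ε * (a * b)) ∨
       (a ^ 2 - d * b ^ 2 = -8 ∧ x = ε * (a ^ 2 + 4) ∧ y = ε * (a * b))) := by
  have hx4 : IsCoprime x (2 ^ 2) := (Int.isCoprime_two_right.2 hx).pow_right
  obtain ⟨a, b, ε, hε, hab⟩ :=
    stmt_3_general hd.ne' (isCoprime_add_sub_of_even (by decide) hx4) hxy hcong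
  have hodd : Odd (ε * (a * b)) := by
    rcases hab with ⟨-, -, rfl⟩ | ⟨-, -, rfl⟩ <;> exact hy
  obtain ⟨ha, hb⟩ := Int.odd_mul.1 (Int.odd_mul.1 hodd).2
  exact ⟨a, b, ε, ha, hb, hε, hab⟩
end

section
/- Let $k$ be an odd integer and $y$ an integer such that $k^2$ divides $y^2 + 8k$. Then there exists a natural number $b$ with $k = b^2$ or $k = -b^2$; that is, $|k|$ is a perfect square. -/
theorem stmt_4_general {R : Type*} [CommRing R] [GCDMonoid R] {k m y : R} {n : ℕ}
    (hkm : IsRelPrime k m) (hdvd : k ^ 2 ∣ y ^ n + m * k) :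
    ∃ b : R, Associated (b ^ n) k := by
  obtain ⟨c, hc⟩ := hdvd
  have hfactor : k * (k * c - m) = y ^ n := by linear_combination -hc
  have hcoprime : IsRelPrime k (k * c - m) := IsRelPrime.mul_sub_left_right_iff.mpr hkm
  exact exists_associated_pow_of_mul_eq_pow (gcd_isUnit_iff_isRelPrime.mpr hcoprime) hfactor

/-- Key divisibility lemma of Section 3.1: if `k` is odd and `k²` divides `y² + 8k`,
then `|k|` is a perfect square, i.e. `k = b²` or `k = -b²` for some natural `b`. -/
theorem stmt_4 (k y : ℤ) (hk : Odd k) (hdvd : k ^ 2 ∣ y ^ 2 + 8 * k) :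
    ∃ b : ℕ, k = (b : ℤ) ^ 2 ∨ k = -((b : ℤ) ^ 2) := by
  have hk8 : IsCoprime k 8 := (Int.isCoprime_two_right.mpr hk).pow_right (n := 3)
  obtain ⟨b, hb⟩ := stmt_4_general hk8.isRelPrime hdvd
  exact ⟨b.natAbs, by simpa only [Int.natAbs_sq] using Int.associated_iff.mp hb.symm⟩
end

section
/- For every positive integer $k$, the number $d = (14k + 1)^2 - 8$ belongs to $\mathcal{D}_+$ but not to $\mathcal{D}_-$ (indeed, the equation $a^2 - d b^2 = -8$ has no solution in integers $a, b$ at all). Consequently, the set $\mathcal{D}_+ \setminus \mathcal{D}_-$ is infinite. -/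
/-- `𝒟₊`: positive integers `d` such that `a² - d b² = 8` has a solution in odd integers. -/
def Dplus : Set ℕ :=
  {d | 0 < d ∧ ∃ a b : ℤ, Odd a ∧ Odd b ∧ a ^ 2 - (d : ℤ) * b ^ 2 = 8}

/-- `𝒟₋`: positive integers `d` such that `a² - d b² = -8` has a solution in odd integers. -/
def Dminus : Set ℕ :=
  {d | 0 < d ∧ ∃ a b : ℤ, Odd a ∧ Odd b ∧ a ^ 2 - (d : ℤ) * b ^ 2 = -8}

theorem not_exists_sq_sub_mul_sq_eq_of_not_isSquare {n : ℕ} {c d : ℤ} (hd : (n : ℤ) ∣ d)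
    (hc : ¬ IsSquare (c : ZMod n)) : ¬ ∃ a b : ℤ, a ^ 2 - d * b ^ 2 = c := by
  rintro ⟨a, b, rfl⟩
  have hd' : (d : ZMod n) = 0 := (ZMod.intCast_zmod_eq_zero_iff_dvd d n).2 hd
  refine hc ⟨a, ?_⟩
  push_cast
  rw [hd', zero_mul, sub_zero, sq]

theorem not_isSquare_neg_eight_zmod_seven : ¬ IsSquare ((-8 : ℤ) : ZMod 7) := by
  decide

theorem not_exists_sq_sub_mul_sq_eq_neg_eight_of_seven_dvd {d : ℕ} (hd : 7 ∣ d) :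
    ¬ ∃ a b : ℤ, a ^ 2 - (d : ℤ) * b ^ 2 = -8 :=
  not_exists_sq_sub_mul_sq_eq_of_not_isSquare (n := 7) (Int.natCast_dvd_natCast.2 hd)
    not_isSquare_neg_eight_zmod_seven

theorem notMem_Dminus_of_seven_dvd {d : ℕ} (hd : 7 ∣ d) : d ∉ Dminus := by
  rintro ⟨-, a, b, -, -, hab⟩
  exact not_exists_sq_sub_mul_sq_eq_neg_eight_of_seven_dvd hd ⟨a, b, hab⟩

theorem sq_sub_eight_mem_Dplus {m : ℕ} (hm : 3 ≤ m) (hodd : Odd m) : m ^ 2 - 8 ∈ Dplus := by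
  have hsq : 8 < m ^ 2 := by nlinarith
  refine ⟨Nat.sub_pos_of_lt hsq, m, 1, hodd.natCast, odd_one, ?_⟩
  push_cast [Nat.cast_sub hsq.le]
  ring

/-- At `m = 1` the subtraction truncates to `0`, which is still a multiple of `7`. -/
theorem seven_dvd_sq_sub_eight {m : ℕ} (hm : m ≡ 1 [MOD 7]) : 7 ∣ m ^ 2 - 8 := by
  have hmod : m ^ 2 % 7 = 1 := hm.pow 2
  omega

/-- For every positive `k`, the number `d = (14k+1)² - 8` lies in `𝒟₊` and the equation
`a² - d b² = -8` has no integral solution at all (so `d ∉ 𝒟₋`); hence `𝒟₊ \ 𝒟₋` is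
infinite. -/
theorem stmt_9 :
    (∀ k : ℕ, 0 < k →
      (14 * k + 1) ^ 2 - 8 ∈ Dplus ∧
      (¬ ∃ a b : ℤ, a ^ 2 - (((14 * k + 1) ^ 2 - 8 : ℕ) : ℤ) * b ^ 2 = -8) ∧
      (14 * k + 1) ^ 2 - 8 ∉ Dminus) ∧
    (Dplus \ Dminus).Infinite := by
  have seven_dvd (k : ℕ) : 7 ∣ (14 * k + 1) ^ 2 - 8 :=
    seven_dvd_sq_sub_eight (by simp only [Nat.ModEq]; omega)
  have mem_Dplus {k : ℕ} (hk : 0 < k) : (14 * k + 1) ^ 2 - 8 ∈ Dplus :=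
    sq_sub_eight_mem_Dplus (by omega) ⟨7 * k, by ring⟩
  refine ⟨fun k hk ↦ ⟨mem_Dplus hk,
    not_exists_sq_sub_mul_sq_eq_neg_eight_of_seven_dvd (seven_dvd k),
    notMem_Dminus_of_seven_dvd (seven_dvd k)⟩, ?_⟩
  refine Set.infinite_of_forall_exists_gt fun n ↦ ⟨(14 * (n + 1) + 1) ^ 2 - 8,
    ⟨mem_Dplus n.succ_pos, notMem_Dminus_of_seven_dvd (seven_dvd _)⟩, ?_⟩
  have hsq : n + 8 < (14 * (n + 1) + 1) ^ 2 := by nlinarith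
  exact Nat.lt_sub_of_add_lt hsq
end

section
/- For every positive integer $k$, the number $d = (6k + 1)^2 + 8$ belongs to $\mathcal{D}_-$ but not to $\mathcal{D}_+$ (indeed, the equation $a^2 - d b^2 = 8$ has no solution in integers $a, b$ at all). Consequently, the set $\mathcal{D}_- \setminus \mathcal{D}_+$ is infinite. -/
theorem isSquare_intCast_zmod_of_sq_sub_mul_sq_eq {m : ℕ} {d n a b : ℤ} (hmd : (m : ℤ) ∣ d)
    (h : a ^ 2 - d * b ^ 2 = n) : IsSquare (n : ZMod m) := by
  have hd : (d : ZMod m) = 0 := (ZMod.intCast_zmod_eq_zero_iff_dvd d m).mpr hmd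
  exact ⟨a, by simp [← h, hd, sq]⟩

theorem not_exists_sq_sub_mul_sq_eq_eight_of_three_dvd {d : ℤ} (hd : 3 ∣ d) :
    ¬ ∃ a b : ℤ, a ^ 2 - d * b ^ 2 = 8 := by
  rintro ⟨a, b, h⟩
  have eight_not_square : ¬ IsSquare ((8 : ℤ) : ZMod 3) := by decide
  exact eight_not_square (isSquare_intCast_zmod_of_sq_sub_mul_sq_eq hd h)

theorem notMem_Dplus_of_three_dvd {d : ℕ} (hd : 3 ∣ d) : d ∉ Dplus := by
  rintro ⟨-, a, b, -, -, h⟩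
  exact not_exists_sq_sub_mul_sq_eq_eight_of_three_dvd (mod_cast hd) ⟨a, b, h⟩

theorem sq_add_eight_mem_Dminus {m : ℕ} (hm : Odd m) : m ^ 2 + 8 ∈ Dminus :=
  ⟨by positivity, m, 1, mod_cast hm, odd_one, by push_cast; ring⟩

theorem three_dvd_sq_add_eight {m : ℕ} (hm : ¬ 3 ∣ m) : 3 ∣ m ^ 2 + 8 := by
  have coprime_three : m.Coprime 3 := (Nat.prime_three.coprime_iff_not_dvd.mpr hm).symm
  have sq_modEq_one : m ^ 2 ≡ 1 [MOD 3] := Nat.ModEq.pow_totient coprime_three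
  apply Nat.modEq_zero_iff_dvd.mp
  calc
    m ^ 2 + 8 ≡ 1 + 8 [MOD 3] := sq_modEq_one.add_right 8
    _ ≡ 0 [MOD 3] := by decide

theorem strictMono_mul_add_sq_add {a : ℕ} (ha : 0 < a) (b c : ℕ) :
    StrictMono fun k : ℕ => (a * k + b) ^ 2 + c := by
  intro j k hjk
  dsimp only
  gcongr

/-- For every positive `k`, the number `d = (6k+1)² + 8` lies in `𝒟₋` and the equation
`a² - d b² = 8` has no integral solution at all (so `d ∉ 𝒟₊`); hence `𝒟₋ \ 𝒟₊` is
infinite. -/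
theorem stmt_10 :
    (∀ k : ℕ, 0 < k →
      (6 * k + 1) ^ 2 + 8 ∈ Dminus ∧
      (¬ ∃ a b : ℤ, a ^ 2 - (((6 * k + 1) ^ 2 + 8 : ℕ) : ℤ) * b ^ 2 = 8) ∧
      (6 * k + 1) ^ 2 + 8 ∉ Dplus) ∧
    (Dminus \ Dplus).Infinite := by
  have three_dvd (k : ℕ) : 3 ∣ (6 * k + 1) ^ 2 + 8 := three_dvd_sq_add_eight (by omega)
  have mem_Dminus (k : ℕ) : (6 * k + 1) ^ 2 + 8 ∈ Dminus :=
    sq_add_eight_mem_Dminus ⟨3 * k, by ring⟩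
  have notMem_Dplus (k : ℕ) : (6 * k + 1) ^ 2 + 8 ∉ Dplus :=
    notMem_Dplus_of_three_dvd (three_dvd k)
  constructor
  · intro k _
    exact ⟨mem_Dminus k,
      not_exists_sq_sub_mul_sq_eq_eight_of_three_dvd (mod_cast three_dvd k), notMem_Dplus k⟩
  · exact Set.infinite_of_injective_forall_mem
      (strictMono_mul_add_sq_add (by norm_num : 0 < 6) 1 8).injective
      fun k => ⟨mem_Dminus k, notMem_Dplus k⟩
end

section
/- Let $d$ be a positive integer with $d \equiv 1 \pmod 8$ and let $\epsilon \in \{1, -1\}$. Then the equation $a^2 - d b^2 = 8\epsilon$ has a solution $a, b$ in the ring $\mathbb{Z}_p$ of $p$-adic integers for every prime $p$ if and only if for every odd prime $p$ dividing $d$, the residue class of $2\epsilon$ is a nonzero square modulo $p$ (equivalently, the Legendre symbol $\left(\frac{2\epsilon}{p}\right) = 1$). -/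
/-!
In a Henselian local ring `R` with finite residue field `K` of odd characteristic, a unit `m` has
the form `a² - d b²` as soon as it has this form in `K`: fixing one of the two variables leaves a
quadratic equation for the other with a simple root in `K`. Over `K`, counting values shows that
`x² - d y²` represents everything unless `d = 0`, when it represents only the squares.

When `2` is not a unit, every `c ≡ 1 (mod 8)` is a square, so `a² - d b² = m` is solvable with
`b = 1` if `d ≡ 1` and `m ≡ 0 (mod 8)`. Hence for `d ≡ 1 (mod 8)` the only obstructions to
`a² - d b² = 8ε` over the rings `ℤ_[p]` come from the odd primes `p ∣ d`, and there `8ε` is a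
square modulo `p` exactly when `2ε` is.
-/

open Polynomial IsLocalRing

instance henselianLocalRing_padicInt (p : ℕ) [Fact p.Prime] : HenselianLocalRing ℤ_[p] where
  is_henselian f hf a₀ h₁ h₂ :=
    HenselianRing.is_henselian (I := maximalIdeal ℤ_[p]) f hf a₀ h₁ (h₂.map _)

section Field

variable {K : Type*} [Field K]

theorem isSquare_sq_mul_iff {a b : K} (ha : a ≠ 0) : IsSquare (a ^ 2 * b) ↔ IsSquare b := by
  refine ⟨fun h ↦ ?_, (IsSquare.sq a).mul⟩
  have key : b = (a⁻¹) ^ 2 * (a ^ 2 * b) := by field_simp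
  exact key ▸ (IsSquare.sq a⁻¹).mul h

theorem exists_sq_sub_mul_sq_eq_of_finite [Finite K] (h2 : (2 : K) ≠ 0) {d : K} (hd : d ≠ 0)
    (m : K) : ∃ x y : K, x ^ 2 - d * y ^ 2 = m := by
  cases nonempty_fintype K
  have card_odd : Fintype.card K % 2 = 1 :=
    FiniteField.odd_card_of_char_ne_two fun h ↦
      h2 (by exact_mod_cast h ▸ ringChar.Nat.cast_ringChar)
  obtain ⟨x, y, hxy⟩ := FiniteField.exists_root_sum_quadratic
    (degree_X_pow 2) (degree_quadratic (b := 0) (c := -m) (neg_ne_zero.mpr hd)) card_odd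
  simp only [eval_add, eval_mul, eval_pow, eval_X, eval_C] at hxy
  exact ⟨x, y, by linear_combination hxy⟩

end Field

section Henselian

universe u

variable {R : Type u} [CommRing R] [HenselianLocalRing R]

section Map

variable {K : Type u} [Field K] {φ : R →+* K}

theorem exists_quadratic_root_of_map (hφ : Function.Surjective φ) {b c : R} {x : K}
    (hx : x ^ 2 + φ b * x + φ c = 0) (hx' : 2 * x + φ b ≠ 0) :
    ∃ a : R, a ^ 2 + b * a + c = 0 := by
  have lift_simple_root := ((HenselianLocalRing.TFAE R).out 0 2).mp ‹_›
  have monic : (X ^ 2 + C b * X + C c).Monic := by monicity!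
  obtain ⟨a, ha, -⟩ := lift_simple_root φ hφ _ monic x (by simpa using hx)
    (by simpa [one_add_one_eq_two, map_ofNat φ 2] using hx')
  exact ⟨a, by simpa using ha⟩

theorem isSquare_of_isSquare_map (hφ : Function.Surjective φ) (h2 : (2 : K) ≠ 0) {c : R}
    (hc : φ c ≠ 0) (h : IsSquare (φ c)) : IsSquare c := by
  obtain ⟨x, hx⟩ := h
  have hx0 : x ≠ 0 := by rintro rfl; simp [hx] at hc
  obtain ⟨a, ha⟩ := exists_quadratic_root_of_map (b := 0) (c := -c) (x := x) hφ
    (by simp [hx, sq]) (by simp [h2, hx0])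
  exact ⟨a, by linear_combination -ha⟩

theorem exists_sq_sub_mul_sq_eq_of_map (hφ : Function.Surjective φ) (h2 : (2 : K) ≠ 0)
    {d m : R} (hm : φ m ≠ 0) {x y : K} (h : x ^ 2 - φ d * y ^ 2 = φ m) :
    ∃ a b : R, a ^ 2 - d * b ^ 2 = m := by
  by_cases hx : x = 0
  · have hdy : φ d * y ^ 2 = -φ m := by simp [← h, hx]
    have hd : φ d ≠ 0 := by intro hd; simp [hd, hm] at hdy
    have : IsLocalHom φ := hφ.isLocalHom
    obtain ⟨u, rfl⟩ := isUnit_of_map_unit φ d hd.isUnit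
    have map_eq : φ (u⁻¹ * -m) = y ^ 2 := by
      rw [map_mul, map_neg, ← hdy, ← mul_assoc, ← map_mul, u.inv_mul, map_one, one_mul]
    obtain ⟨b, hb⟩ : IsSquare (↑u⁻¹ * -m) :=
      isSquare_of_isSquare_map hφ h2 (by simp [hd, hm]) (map_eq ▸ IsSquare.sq y)
    exact ⟨0, b, by linear_combination u * hb + m * u.mul_inv⟩
  · obtain ⟨b, rfl⟩ := hφ y
    have map_eq : φ (m + d * b ^ 2) = x ^ 2 := by
      simp only [map_add, map_mul, map_pow, ← h, sub_add_cancel]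
    obtain ⟨a, ha⟩ : IsSquare (m + d * b ^ 2) :=
      isSquare_of_isSquare_map hφ h2 (map_eq ▸ pow_ne_zero 2 hx) (map_eq ▸ IsSquare.sq x)
    exact ⟨a, b, by linear_combination -ha⟩

theorem exists_sq_sub_mul_sq_eq_iff [Finite K] (hφ : Function.Surjective φ) (h2 : (2 : K) ≠ 0)
    {d m : R} (hm : φ m ≠ 0) :
    (∃ a b : R, a ^ 2 - d * b ^ 2 = m) ↔ (φ d = 0 → IsSquare (φ m)) := by
  constructor
  · rintro ⟨a, b, rfl⟩ hd
    exact ⟨φ a, by simp [hd, sq]⟩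
  · intro h
    by_cases hd : φ d = 0
    · obtain ⟨x, hx⟩ := h hd
      exact exists_sq_sub_mul_sq_eq_of_map (x := x) (y := 0) hφ h2 hm (by simp [hx, sq])
    · obtain ⟨x, y, hxy⟩ := exists_sq_sub_mul_sq_eq_of_finite h2 hd (φ m)
      exact exists_sq_sub_mul_sq_eq_of_map hφ h2 hm hxy

end Map

theorem isSquare_of_eight_dvd_sub_one (h2 : (2 : R) ∈ maximalIdeal R) {c : R}
    (hc : 8 ∣ c - 1) : IsSquare c := by
  obtain ⟨k, hk⟩ := hc
  have residue_two : residue R 2 = 0 := (residue_eq_zero_iff 2).mpr h2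
  -- Substituting `1 + 2w` for the square root of `c = 1 + 8k` gives `w² + w = 2k`, whose residual
  -- root `w = 0` is simple.
  obtain ⟨w, hw⟩ := exists_quadratic_root_of_map (φ := residue R) (b := 1) (c := -(2 * k)) (x := 0)
    residue_surjective (by rw [map_neg, map_mul, residue_two]; ring) (by simp)
  exact ⟨1 + 2 * w, by linear_combination hk - 4 * hw⟩

theorem exists_sq_sub_mul_sq_eq_of_eight_dvd (h2 : (2 : R) ∈ maximalIdeal R) {d m : R}
    (hd : 8 ∣ d - 1) (hm : 8 ∣ m) : ∃ a b : R, a ^ 2 - d * b ^ 2 = m := by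
  obtain ⟨a, ha⟩ : IsSquare (d + m) :=
    isSquare_of_eight_dvd_sub_one h2 (by convert dvd_add hd hm using 1; ring)
  exact ⟨a, 1, by linear_combination -ha⟩

end Henselian

theorem two_ne_zero_zmod_of_odd {n : ℕ} [Nontrivial (ZMod n)] (hn : Odd n) : (2 : ZMod n) ≠ 0 :=
  ((ZMod.isUnit_iff_coprime 2 n).mpr hn.coprime_two_left).ne_zero

theorem padicInt_exists_sq_sub_mul_sq_eq_intCast_iff {p : ℕ} [Fact p.Prime] (hp : Odd p)
    {d m : ℤ} (hm : ¬ (p : ℤ) ∣ m) :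
    (∃ a b : ℤ_[p], a ^ 2 - (d : ℤ_[p]) * b ^ 2 = m) ↔
      ((p : ℤ) ∣ d → IsSquare (m : ZMod p)) := by
  rw [exists_sq_sub_mul_sq_eq_iff (φ := PadicInt.toZMod) (ZMod.ringHom_surjective _)
    (two_ne_zero_zmod_of_odd hp) (by rwa [map_intCast, Ne, ZMod.intCast_zmod_eq_zero_iff_dvd])]
  simp only [map_intCast, ZMod.intCast_zmod_eq_zero_iff_dvd]

theorem padicInt_two_exists_sq_sub_mul_sq_eq_intCast {d m : ℤ} (hd : 8 ∣ d - 1) (hm : 8 ∣ m) :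
    ∃ a b : ℤ_[2], a ^ 2 - (d : ℤ_[2]) * b ^ 2 = m := by
  have two_mem : (2 : ℤ_[2]) ∈ maximalIdeal ℤ_[2] := PadicInt.p_nonunit
  refine exists_sq_sub_mul_sq_eq_of_eight_dvd two_mem ?_ ?_
  · exact_mod_cast map_dvd (Int.castRingHom ℤ_[2]) hd
  · exact_mod_cast map_dvd (Int.castRingHom ℤ_[2]) hm

section EightMul

variable {p : ℕ} [Fact p.Prime] {ε : ℤ}

theorem intCast_two_mul_ne_zero_zmod (hp : Odd p) (hε : ¬ (p : ℤ) ∣ ε) :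
    ((2 * ε : ℤ) : ZMod p) ≠ 0 := by
  rw [Int.cast_mul]
  exact mul_ne_zero (mod_cast two_ne_zero_zmod_of_odd hp)
    (mt (ZMod.intCast_zmod_eq_zero_iff_dvd ε p).mp hε)

theorem padicInt_exists_sq_sub_mul_sq_eq_eight_mul_iff (hp : Odd p) {d : ℤ}
    (hε : ¬ (p : ℤ) ∣ ε) :
    (∃ a b : ℤ_[p], a ^ 2 - (d : ℤ_[p]) * b ^ 2 = ((8 * ε : ℤ) : ℤ_[p])) ↔
      ((p : ℤ) ∣ d → IsSquare ((2 * ε : ℤ) : ZMod p)) := by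
  have h2 : (2 : ZMod p) ≠ 0 := two_ne_zero_zmod_of_odd hp
  have eight_mul : ((8 * ε : ℤ) : ZMod p) = 2 ^ 2 * ((2 * ε : ℤ) : ZMod p) := by
    push_cast; ring
  have not_dvd : ¬ (p : ℤ) ∣ 8 * ε := by
    rw [← ZMod.intCast_zmod_eq_zero_iff_dvd, eight_mul]
    exact mul_ne_zero (pow_ne_zero 2 h2) (intCast_two_mul_ne_zero_zmod hp hε)
  rw [padicInt_exists_sq_sub_mul_sq_eq_intCast_iff hp not_dvd, eight_mul, isSquare_sq_mul_iff h2]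

end EightMul

theorem stmt_11_general (d : ℤ) (hd8 : d % 8 = 1) (ε : ℤ)
    (hε : ∀ p : ℕ, p.Prime → Odd p → ¬ (p : ℤ) ∣ ε) :
    (∀ (p : ℕ) [Fact p.Prime], ∃ a b : ℤ_[p],
        a ^ 2 - (d : ℤ_[p]) * b ^ 2 = ((8 * ε : ℤ) : ℤ_[p])) ↔
    (∀ p : ℕ, p.Prime → Odd p → (p : ℤ) ∣ d →
        IsSquare ((2 * ε : ℤ) : ZMod p) ∧ ((2 * ε : ℤ) : ZMod p) ≠ 0) := by
  constructor
  · intro solvable p hp hodd hpd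
    have : Fact p.Prime := ⟨hp⟩
    have hpε := hε p hp hodd
    exact ⟨(padicInt_exists_sq_sub_mul_sq_eq_eight_mul_iff hodd hpε).mp (solvable p) hpd,
      intCast_two_mul_ne_zero_zmod hodd hpε⟩
  · intro isSquare_mod p hp
    rcases hp.out.eq_two_or_odd' with rfl | hodd
    · exact padicInt_two_exists_sq_sub_mul_sq_eq_intCast (by lia) (dvd_mul_right 8 ε)
    · exact (padicInt_exists_sq_sub_mul_sq_eq_eight_mul_iff hodd (hε p hp.out hodd)).mpr
        fun hpd ↦ (isSquare_mod p hp.out hodd hpd).1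

/-- Proposition 3.2.4: for `d ≡ 1 (mod 8)` and a sign `ε = ±1`, the equation
`a² - d b² = 8ε` is solvable in the `p`-adic integers for every prime `p` iff for every
odd prime `p` dividing `d` the class of `2ε` is a nonzero square modulo `p`. -/
theorem stmt_11 (d : ℕ) (hd : 0 < d) (hd8 : d % 8 = 1) (ε : ℤ) (hε : ε = 1 ∨ ε = -1) :
    (∀ (p : ℕ) [Fact p.Prime], ∃ a b : ℤ_[p],
        a ^ 2 - (d : ℤ_[p]) * b ^ 2 = ((8 * ε : ℤ) : ℤ_[p])) ↔
    (∀ p : ℕ, p.Prime → Odd p → p ∣ d →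
        IsSquare ((2 * ε : ℤ) : ZMod p) ∧ ((2 * ε : ℤ) : ZMod p) ≠ 0) := by
  simpa [Int.natCast_dvd_natCast] using stmt_11_general d (by lia) ε fun p hp _ hpε ↦
    (Nat.prime_iff_prime_int.mp hp).irreducible.not_dvd_isUnit (Int.isUnit_iff.mpr hε) hpε
end

section
/- Let $d$ be a positive integer with $d \equiv 1 \pmod 8$ which is not a perfect square, and assume that at least one of the equations $a^2 - d b^2 = 8$ and $a^2 - d b^2 = -8$ has a solution in integers $a, b$. Then both equations $a^2 - d b^2 = 8$ and $a^2 - d b^2 = -8$ have integer solutions if and only if the equation $s^2 - d t^2 = -4$ has a solution in integers $s, t$. -/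
/-!
Let `a + b√d` and `c + e√d` have norms `a² - d b² = m` and `c² - d e² = n`. Multiplying the first
by the second, or by its conjugate, gives up to sign elements of norm `m n` with `√d`-coordinates
`a e + b c` and `a e - b c`. These have the same parity and product `m e² - n b²`. For norms `8`
and `-8` the product is divisible by `8`, so `4` divides one of the coordinates, hence the whole
element, and the quotient has norm `-4`. For norms `±8` and `-4` the product is even, so `2` divides
both coordinates, hence both elements, and the quotients have norm `∓8`.
-/

theorem two_dvd_add_of_two_dvd_add_mul_sub {u v : ℤ} (h : 2 ∣ (u + v) * (u - v)) : 2 ∣ u + v := by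
  rcases Int.prime_two.dvd_or_dvd h with hadd | hsub
  · exact hadd
  · omega

theorem four_dvd_add_or_four_dvd_sub_of_eight_dvd {u v : ℤ} (h : 8 ∣ (u + v) * (u - v)) :
    4 ∣ u + v ∨ 4 ∣ u - v := by
  obtain ⟨p, hp⟩ : 2 ∣ u + v :=
    two_dvd_add_of_two_dvd_add_mul_sub (dvd_trans (by norm_num) h)
  obtain ⟨q, hq⟩ : 2 ∣ u - v := by omega
  have two_dvd_mul : 2 ∣ p * q := by
    have product_eq : (u + v) * (u - v) = 4 * (p * q) := by rw [hp, hq]; ring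
    omega
  rcases Int.prime_two.dvd_or_dvd two_dvd_mul with hp_even | hq_even
  · left; omega
  · right; omega

section PellForm

variable {d a b c e k m n r : ℤ}

theorem add_mul_sub_eq_of_sq_sub_mul_sq_eq (hab : a ^ 2 - d * b ^ 2 = m)
    (hce : c ^ 2 - d * e ^ 2 = n) :
    (a * e + b * c) * (a * e - b * c) = m * e ^ 2 - n * b ^ 2 := by
  linear_combination e ^ 2 * hab - b ^ 2 * hce

theorem exists_sq_sub_mul_sq_eq_of_dvd (hk : k ≠ 0) (hab : a ^ 2 - d * b ^ 2 = k ^ 2 * r)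
    (hkb : k ∣ b) : ∃ x y : ℤ, x ^ 2 - d * y ^ 2 = r := by
  obtain ⟨y, rfl⟩ := hkb
  have hka : k ^ 2 ∣ a ^ 2 := ⟨r + d * y ^ 2, by linear_combination hab⟩
  obtain ⟨x, rfl⟩ := (Int.pow_dvd_pow_iff two_ne_zero).mp hka
  exact ⟨x, y, mul_left_cancel₀ (pow_ne_zero 2 hk) (by linear_combination hab)⟩

theorem exists_sq_sub_mul_sq_eq_of_mul_eq (hk : k ≠ 0) (hab : a ^ 2 - d * b ^ 2 = m)
    (hce : c ^ 2 - d * e ^ 2 = n) (hmn : m * n = k ^ 2 * r)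
    (hdvd : k ∣ a * e + b * c ∨ k ∣ a * e - b * c) :
    ∃ x y : ℤ, x ^ 2 - d * y ^ 2 = r := by
  rw [← hab, ← hce] at hmn
  rcases hdvd with hadd | hsub
  · exact exists_sq_sub_mul_sq_eq_of_dvd (a := a * c + d * b * e) hk (by rw [← hmn]; ring) hadd
  · exact exists_sq_sub_mul_sq_eq_of_dvd (a := a * c - d * b * e) hk (by rw [← hmn]; ring) hsub

theorem exists_sq_sub_mul_sq_eq_four_mul (hab : a ^ 2 - d * b ^ 2 = 8 * m)
    (hce : c ^ 2 - d * e ^ 2 = 8 * n) : ∃ s t : ℤ, s ^ 2 - d * t ^ 2 = 4 * (m * n) := by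
  have eight_dvd : 8 ∣ (a * e + b * c) * (a * e - b * c) :=
    ⟨m * e ^ 2 - n * b ^ 2, by rw [add_mul_sub_eq_of_sq_sub_mul_sq_eq hab hce]; ring⟩
  exact exists_sq_sub_mul_sq_eq_of_mul_eq (k := 4) (by norm_num) hab hce (by ring)
    (four_dvd_add_or_four_dvd_sub_of_eight_dvd eight_dvd)

theorem exists_sq_sub_mul_sq_eq_two_mul (hab : a ^ 2 - d * b ^ 2 = 2 * m)
    (hce : c ^ 2 - d * e ^ 2 = 4 * n) : ∃ x y : ℤ, x ^ 2 - d * y ^ 2 = 2 * (m * n) := by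
  have two_dvd : 2 ∣ (a * e + b * c) * (a * e - b * c) :=
    ⟨m * e ^ 2 - 2 * n * b ^ 2, by rw [add_mul_sub_eq_of_sq_sub_mul_sq_eq hab hce]; ring⟩
  exact exists_sq_sub_mul_sq_eq_of_mul_eq two_ne_zero hab hce (by ring)
    (.inl (two_dvd_add_of_two_dvd_add_mul_sub two_dvd))

end PellForm

theorem stmt_16_general (d : ℤ)
    (hD : ∃ a b : ℤ, a ^ 2 - d * b ^ 2 = 8 ∨ a ^ 2 - d * b ^ 2 = -8) :
    ((∃ a b : ℤ, a ^ 2 - d * b ^ 2 = 8) ∧ (∃ a b : ℤ, a ^ 2 - d * b ^ 2 = -8)) ↔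
      (∃ s t : ℤ, s ^ 2 - d * t ^ 2 = -4) := by
  constructor
  · rintro ⟨⟨a, b, hab⟩, c, e, hce⟩
    exact exists_sq_sub_mul_sq_eq_four_mul (m := 1) (n := -1) hab hce
  · rintro ⟨s, t, hst⟩
    obtain ⟨a, b, hpos | hneg⟩ := hD
    · refine ⟨⟨a, b, hpos⟩, ?_⟩
      simpa using exists_sq_sub_mul_sq_eq_two_mul (m := 4) (n := -1) hpos hst
    · refine ⟨?_, a, b, hneg⟩
      simpa using exists_sq_sub_mul_sq_eq_two_mul (m := -4) (n := -1) hneg hst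

/-- Section 3.2 (Theorems 3.2.2 and 3.2.3): for a nonsquare `d ≡ 1 (mod 8)` with
`d ∈ 𝒟`, both equations `a² - d b² = 8` and `a² - d b² = -8` are solvable iff the
fundamental unit has norm `-1`, i.e. iff `s² - d t² = -4` is solvable. -/
theorem stmt_16 (d : ℤ) (hd : 0 < d) (hd8 : d ≡ 1 [ZMOD 8]) (hsq : ¬ IsSquare d)
    (hD : ∃ a b : ℤ, a ^ 2 - d * b ^ 2 = 8 ∨ a ^ 2 - d * b ^ 2 = -8) :
    ((∃ a b : ℤ, a ^ 2 - d * b ^ 2 = 8) ∧ (∃ a b : ℤ, a ^ 2 - d * b ^ 2 = -8)) ↔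
      (∃ s t : ℤ, s ^ 2 - d * t ^ 2 = -4) :=
  stmt_16_general d hD
end

section
/- Let $d$ be a positive integer with $d \equiv 1 \pmod 4$, and let $G = \begin{pmatrix} 2 & 1 \\ 1 & (1-d)/2 \end{pmatrix}$, a symmetric integer matrix. Then for any vectors $v, w \in \mathbb{Z}^2$ with $v^{T} G v = 2$ and $w^{T} G w = 2$, there exist exactly two $2 \times 2$ integer matrices $M$ satisfying $M^{T} G M = G$ and $M w = v$. -/
open Matrix

/-!
The Gram matrix `!![2, b; b, -2 * a]` is that of the form `Tr (x * star y)` on the quadratic algebra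
`R[ω]`, `ω ^ 2 = a + b * ω`, in the basis `1, ω`; the lattice `N²_d` is the case `R = ℤ`, `b = 1`,
`d = 1 + 4 * a`. A vector has square `2` exactly when it is an element of norm one, and
multiplication by such an element is an isometry, so isometries act transitively on these vectors.
An isometry fixing `1` preserves norm and trace, which forces it to send `ω` to `ω` or `star ω`.
Hence the isometries taking `w` to `v` are `x ↦ v * star w * x` and `x ↦ v * w * star x`.
-/

section IsometryMonoid

variable {n R : Type*} [Fintype n] [DecidableEq n] [CommSemiring R]

/-- The monoid of matrices preserving the bilinear form with Gram matrix `G`. It is only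
a submonoid of all matrices, since for degenerate `G` such a matrix need not be invertible. -/
def isometryMonoid (G : Matrix n n R) : Submonoid (Matrix n n R) where
  carrier := {M | Mᵀ * G * M = G}
  one_mem' := by simp
  mul_mem' {A B} hA hB := by
    calc (A * B)ᵀ * G * (A * B) = Bᵀ * (Aᵀ * G * A) * B := by
          simp only [transpose_mul, Matrix.mul_assoc]
      _ = G := by rw [hA.out, hB.out]

theorem mem_isometryMonoid_iff {G M : Matrix n n R} : M ∈ isometryMonoid G ↔ Mᵀ * G * M = G :=
  Iff.rfl

end IsometryMonoid

section NormForm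

open QuadraticAlgebra Algebra

variable {R : Type*} [CommRing R] {a b : R}

/-- The Gram matrix, in the basis `1, ω`, of the trace form `Tr (x * star y)` on
`QuadraticAlgebra R a b`; the associated quadratic form is twice the norm. -/
def normGram (a b : R) : Matrix (Fin 2) (Fin 2) R := !![2, b; b, -2 * a]

/-- The matrix of the conjugation `star` of `QuadraticAlgebra R a b` in the basis `1, ω`. In the
lattice `N²_d` it is the reflection `s_α`. -/
def conjMatrix (b : R) : Matrix (Fin 2) (Fin 2) R := !![1, b; 0, -1]

theorem dotProduct_normGram_mulVec (z : QuadraticAlgebra R a b) :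
    ![z.re, z.im] ⬝ᵥ normGram a b *ᵥ ![z.re, z.im] = 2 * norm z := by
  simp only [normGram, mulVec_fin_two, vec2_dotProduct, of_apply, cons_val_zero, cons_val_one,
    QuadraticAlgebra.norm_def]
  ring

theorem mem_unitary_of_dotProduct_normGram_eq_two [NoZeroDivisors R] (h2 : (2 : R) ≠ 0)
    {z : QuadraticAlgebra R a b} (hz : ![z.re, z.im] ⬝ᵥ normGram a b *ᵥ ![z.re, z.im] = 2) :
    z ∈ unitary (QuadraticAlgebra R a b) := by
  rw [dotProduct_normGram_mulVec] at hz
  exact norm_eq_one_iff_mem_unitary.mp (mul_left_cancel₀ h2 (by rw [hz, mul_one]))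

theorem leftMulMatrix_basis_eq (z : QuadraticAlgebra R a b) :
    leftMulMatrix (basis a b) z = !![z.re, a * z.im; z.im, z.re + b * z.im] := by
  ext i j
  rw [leftMulMatrix_eq_repr_mul, basis_repr_apply]
  fin_cases i <;> fin_cases j <;> simp [basis]

theorem leftMulMatrix_basis_mulVec (z w : QuadraticAlgebra R a b) :
    leftMulMatrix (basis a b) z *ᵥ ![w.re, w.im] = ![(z * w).re, (z * w).im] := by
  simpa only [basis_repr_apply] using leftMulMatrix_mulVec_repr (basis a b) z w

theorem conjMatrix_mulVec (z : QuadraticAlgebra R a b) :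
    conjMatrix b *ᵥ ![z.re, z.im] = ![(star z).re, (star z).im] := by
  ext i
  fin_cases i <;> simp [conjMatrix, mul_comm]

theorem conjMatrix_mul_leftMulMatrix (z : QuadraticAlgebra R a b) :
    conjMatrix b * leftMulMatrix (basis a b) z =
      leftMulMatrix (basis a b) (star z) * conjMatrix b := by
  ext i j
  simp only [leftMulMatrix_basis_eq, conjMatrix, mul_apply, Fin.sum_univ_two]
  fin_cases i <;> fin_cases j <;> dsimp <;> ring

theorem leftMulMatrix_mul_conjMatrix_mul_leftMulMatrix_star (v w : QuadraticAlgebra R a b) :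
    leftMulMatrix (basis a b) v * conjMatrix b * leftMulMatrix (basis a b) (star w) =
      leftMulMatrix (basis a b) (v * w) * conjMatrix b := by
  rw [mul_assoc, conjMatrix_mul_leftMulMatrix, star_star, ← mul_assoc, ← map_mul]

theorem isUnit_leftMulMatrix_of_mem_unitary {z : QuadraticAlgebra R a b}
    (hz : z ∈ unitary (QuadraticAlgebra R a b)) : IsUnit (leftMulMatrix (basis a b) z) :=
  (IsUnit.of_mul_eq_one _ (Unitary.mul_star_self_of_mem hz)).map _

theorem transpose_leftMulMatrix_mul_normGram_mul (z : QuadraticAlgebra R a b) :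
    (leftMulMatrix (basis a b) z)ᵀ * normGram a b * leftMulMatrix (basis a b) z =
      norm z • normGram a b := by
  ext i j
  simp only [leftMulMatrix_basis_eq, normGram, QuadraticAlgebra.norm_def, mul_apply,
    transpose_apply, Matrix.smul_apply, smul_eq_mul, Fin.sum_univ_two]
  fin_cases i <;> fin_cases j <;> dsimp <;> ring

theorem leftMulMatrix_mem_isometryMonoid {z : QuadraticAlgebra R a b}
    (hz : z ∈ unitary (QuadraticAlgebra R a b)) :
    leftMulMatrix (basis a b) z ∈ isometryMonoid (normGram a b) := by
  rw [mem_isometryMonoid_iff, transpose_leftMulMatrix_mul_normGram_mul,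
    norm_eq_one_iff_mem_unitary.mpr hz, one_smul]

theorem conjMatrix_mem_isometryMonoid : conjMatrix b ∈ isometryMonoid (normGram a b) := by
  rw [mem_isometryMonoid_iff]
  ext i j
  simp only [conjMatrix, normGram, mul_apply, transpose_apply, Fin.sum_univ_two]
  fin_cases i <;> fin_cases j <;> dsimp <;> ring

theorem conjMatrix_ne_one (h2 : (2 : R) ≠ 0) : conjMatrix b ≠ 1 := by
  intro h
  have h11 : (-1 : R) = 1 := congr($h 1 1)
  exact h2 (by linear_combination -h11)

theorem leftMulMatrix_mul_star_ne_mul_conjMatrix (h2 : (2 : R) ≠ 0) {v w : QuadraticAlgebra R a b}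
    (hv : v ∈ unitary (QuadraticAlgebra R a b)) (hw : w ∈ unitary (QuadraticAlgebra R a b)) :
    leftMulMatrix (basis a b) (v * star w) ≠
      leftMulMatrix (basis a b) (v * w) * conjMatrix b := by
  rw [← leftMulMatrix_mul_conjMatrix_mul_leftMulMatrix_star, map_mul]
  intro h
  have hconj : 1 * leftMulMatrix (basis a b) (star w) =
      conjMatrix b * leftMulMatrix (basis a b) (star w) :=
    (isUnit_leftMulMatrix_of_mem_unitary hv).mul_left_cancel (by rw [one_mul, h, mul_assoc])
  exact conjMatrix_ne_one h2
    ((isUnit_leftMulMatrix_of_mem_unitary (Unitary.star_mem hw)).mul_right_cancel hconj).symm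

variable [NoZeroDivisors R]

theorem eq_omega_or_eq_star_omega_of_trace_eq_of_norm_eq (h2 : (2 : R) ≠ 0) (hD : b ^ 2 + 4 * a ≠ 0)
    {z : QuadraticAlgebra R a b} (htrace : trace z = b) (hnorm : norm z = -a) :
    z = ω ∨ z = star ω := by
  rw [trace_def] at htrace
  rw [QuadraticAlgebra.norm_def] at hnorm
  have him : z.im ^ 2 = 1 := by
    refine mul_left_cancel₀ hD ?_
    linear_combination (2 * z.re + b * z.im + b) * htrace - 4 * hnorm
  rcases sq_eq_sq_iff_eq_or_eq_neg.mp (him.trans (one_pow 2).symm) with him | him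
  · left
    have hre : 2 * z.re = 0 := by linear_combination htrace - b * him
    exact QuadraticAlgebra.ext (by simpa [h2] using hre) (by simpa using him)
  · right
    have hre : z.re = b := mul_left_cancel₀ h2 (by linear_combination htrace - b * him)
    exact QuadraticAlgebra.ext (by simpa using hre) (by simpa using him)

theorem eq_one_or_eq_conjMatrix_of_mem_isometryMonoid (h2 : (2 : R) ≠ 0) (hD : b ^ 2 + 4 * a ≠ 0)
    {N : Matrix (Fin 2) (Fin 2) R} (hN : N ∈ isometryMonoid (normGram a b))
    (hN1 : N *ᵥ ![1, 0] = ![1, 0]) : N = 1 ∨ N = conjMatrix b := by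
  have h00 : N 0 0 = 1 := by simpa [mulVec_fin_two] using congr_fun hN1 0
  have h10 : N 1 0 = 0 := by simpa [mulVec_fin_two] using congr_fun hN1 1
  have hG := mem_isometryMonoid_iff.mp hN
  let z : QuadraticAlgebra R a b := ⟨N 0 1, N 1 1⟩
  have htrace : trace z = b := by
    simpa [z, trace_def, normGram, mul_apply, h00, h10] using congr($hG 0 1)
  have hnorm : norm z = -a := by
    refine mul_left_cancel₀ h2 ?_
    calc 2 * norm z = (Nᵀ * normGram a b * N) 1 1 := by
          simp only [z, QuadraticAlgebra.norm_def, normGram, mul_apply, transpose_apply,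
            Fin.sum_univ_two, of_apply, cons_val_zero, cons_val_one]
          ring
      _ = 2 * -a := by rw [hG]; simp [normGram]
  rcases eq_omega_or_eq_star_omega_of_trace_eq_of_norm_eq h2 hD htrace hnorm with hz | hz
  · left
    have h01 : N 0 1 = 0 := congr(($hz).re)
    have h11 : N 1 1 = 1 := congr(($hz).im)
    rw [eta_fin_two N, h00, h01, h10, h11, one_fin_two]
  · right
    have h01 : N 0 1 = b := by simpa [z] using congr(($hz).re)
    have h11 : N 1 1 = -1 := congr(($hz).im)
    rw [eta_fin_two N, h00, h01, h10, h11, conjMatrix]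

theorem setOf_isometry_mulVec_eq (h2 : (2 : R) ≠ 0) (hD : b ^ 2 + 4 * a ≠ 0)
    {v w : QuadraticAlgebra R a b} (hv : v ∈ unitary (QuadraticAlgebra R a b))
    (hw : w ∈ unitary (QuadraticAlgebra R a b)) :
    {M | M ∈ isometryMonoid (normGram a b) ∧ M *ᵥ ![w.re, w.im] = ![v.re, v.im]} =
      {leftMulMatrix (basis a b) (v * star w),
        leftMulMatrix (basis a b) (v * w) * conjMatrix b} := by
  ext M
  constructor
  · rintro ⟨hM, hMw⟩
    let L := leftMulMatrix (basis a b)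
    have hfix : (L (star v) * M * L w) *ᵥ ![1, 0] = ![1, 0] := by
      have hw1 : L w *ᵥ ![1, 0] = ![w.re, w.im] := by
        simpa using leftMulMatrix_basis_mulVec w 1
      rw [← mulVec_mulVec, hw1, ← mulVec_mulVec, hMw, leftMulMatrix_basis_mulVec,
        Unitary.star_mul_self_of_mem hv, re_one, im_one]
    have hM_eq : M = L v * (L (star v) * M * L w) * L (star w) := by
      calc M = L (v * star v) * M * L (w * star w) := by
            simp [Unitary.mul_star_self_of_mem hv, Unitary.mul_star_self_of_mem hw]
        _ = _ := by simp only [map_mul, mul_assoc]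
    have hmem : L (star v) * M * L w ∈ isometryMonoid (normGram a b) :=
      mul_mem (mul_mem (leftMulMatrix_mem_isometryMonoid (Unitary.star_mem hv)) hM)
        (leftMulMatrix_mem_isometryMonoid hw)
    rcases eq_one_or_eq_conjMatrix_of_mem_isometryMonoid h2 hD hmem hfix with hN | hN
    · left
      rw [hM_eq, hN, mul_one, ← map_mul]
    · right
      rw [hM_eq, hN, leftMulMatrix_mul_conjMatrix_mul_leftMulMatrix_star, Set.mem_singleton_iff]
  · rintro (rfl | rfl)
    · refine ⟨leftMulMatrix_mem_isometryMonoid (mul_mem hv (Unitary.star_mem hw)), ?_⟩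
      rw [leftMulMatrix_basis_mulVec, mul_assoc, Unitary.star_mul_self_of_mem hw, mul_one]
    · refine ⟨mul_mem (leftMulMatrix_mem_isometryMonoid (mul_mem hv hw))
        conjMatrix_mem_isometryMonoid, ?_⟩
      rw [← mulVec_mulVec, conjMatrix_mulVec, leftMulMatrix_basis_mulVec, mul_assoc,
        Unitary.mul_star_self_of_mem hw, mul_one]

theorem stmt_17_general (h2 : (2 : R) ≠ 0) (hD : b ^ 2 + 4 * a ≠ 0) {v w : Fin 2 → R}
    (hv : v ⬝ᵥ normGram a b *ᵥ v = 2) (hw : w ⬝ᵥ normGram a b *ᵥ w = 2) :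
    {M | M ∈ isometryMonoid (normGram a b) ∧ M *ᵥ w = v}.ncard = 2 := by
  obtain ⟨v, rfl⟩ := (linearEquivTuple a b).surjective v
  obtain ⟨w, rfl⟩ := (linearEquivTuple a b).surjective w
  simp only [linearEquivTuple_apply] at hv hw ⊢
  have hv' := mem_unitary_of_dotProduct_normGram_eq_two h2 hv
  have hw' := mem_unitary_of_dotProduct_normGram_eq_two h2 hw
  rw [setOf_isometry_mulVec_eq h2 hD hv' hw']
  exact Set.ncard_pair (leftMulMatrix_mul_star_ne_mul_conjMatrix h2 hv' hw')

end NormForm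

/-- Proposition 3.1.2: in the even hyperbolic lattice `N²_d` of determinant `-d`
(Gram matrix `!![2, 1; 1, (1-d)/2]`), for any two vectors of square `2` there exist
exactly two isometries of the lattice taking one to the other. -/
theorem stmt_17 (d : ℤ) (hd : 0 < d) (hd4 : d % 4 = 1) :
    ∀ v w : Fin 2 → ℤ,
      v ⬝ᵥ (!![2, 1; 1, (1 - d) / 2] : Matrix (Fin 2) (Fin 2) ℤ).mulVec v = 2 →
      w ⬝ᵥ (!![2, 1; 1, (1 - d) / 2] : Matrix (Fin 2) (Fin 2) ℤ).mulVec w = 2 →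
      {M : Matrix (Fin 2) (Fin 2) ℤ |
        Mᵀ * !![2, 1; 1, (1 - d) / 2] * M = !![2, 1; 1, (1 - d) / 2] ∧
        M.mulVec w = v}.ncard = 2 := by
  intro v w hv hw
  rw [show (1 - d) / 2 = -2 * (d / 4) by omega] at hv hw ⊢
  exact stmt_17_general two_ne_zero (by omega) hv hw
end

section
/- Let $d$ be a positive integer with $d \equiv 1 \pmod 8$, set $\mu = 1$ if $d \equiv 1 \pmod{16}$ and $\mu = 3$ if $d \equiv 9 \pmod{16}$, and let $G = \begin{pmatrix} -8d & -\mu d \\ -\mu d & (1 - d\mu^2)/8 \end{pmatrix}$, a symmetric integer matrix. Then for any vectors $v, w \in \mathbb{Z}^2$, each having coprime coordinates and satisfying $v^{T} G v = 8$ and $w^{T} G w = 8$, there exists a unique $2 \times 2$ integer matrix $M$ satisfying $M^{T} G M = G$ and $M w = v$. -/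
open Matrix

/-!
Let `H = (-μ, 8)` be the polarization; its pairing with `(x, y)` is `y`. For a vector `v` of square
`8`, rotating the covector `G v` by a right angle gives a vector of square `8 * det G = -8d` that
spans `v^⊥`, so over `ℚ` exactly two isometries take `H` to `v`, one for each sign `ε` in the image
of `H^⊥`. Integrality of the isometry of sign `ε` is a congruence modulo `8`. For `v = (a, b)` it
follows from `4 ∣ b` if `ε = 1` and from `4 ∣ a - μ n b` if `ε = -1`, where `n = (1 - dμ²) / 16`.
The equation `v² = 8` gives `4 ∣ b (a - μ n b)`, and these two factors are coprime, so one of the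
isometries is integral. They cannot both be, because the nontrivial rational isometry fixing `H` is
not integral for odd `μ`. Hence the isometry group acts simply transitively on the primitive vectors
of square `8`.
-/

theorem pow_dvd_or_pow_dvd_of_isCoprime {R : Type*} [CommSemiring R] [IsCancelMulZero R] {p a b : R}
    (hp : Prime p) (hab : IsCoprime a b) {k : ℕ} (h : p ^ k ∣ a * b) : p ^ k ∣ a ∨ p ^ k ∣ b := by
  by_cases hpa : p ∣ a
  · have hpb : ¬p ∣ b := fun hpb => hp.not_isUnit (hab.isUnit_of_dvd' hpa hpb)
    exact Or.inl (hp.pow_dvd_of_dvd_mul_right k hpb h)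
  · exact Or.inr (hp.pow_dvd_of_dvd_mul_left k hpa h)

/-- `M` preserves the bilinear form with Gram matrix `G`, that is, `M` is an isometric endomorphism
of the free module with this form. -/
def IsGramIsometry {ι R : Type*} [Fintype ι] [CommRing R] (G M : Matrix ι ι R) : Prop :=
  Mᵀ * G * M = G

namespace IsGramIsometry

variable {ι R : Type*} [Fintype ι] [CommRing R] {G M N : Matrix ι ι R}

theorem mul (hM : IsGramIsometry G M) (hN : IsGramIsometry G N) : IsGramIsometry G (M * N) :=
  calc (M * N)ᵀ * G * (M * N) = Nᵀ * (Mᵀ * G * M) * N := by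
        simp only [transpose_mul, Matrix.mul_assoc]
    _ = G := by rw [hM, hN]

theorem transpose_mulVec_gram_mulVec (hM : IsGramIsometry G M) {h : ι → R} (hh : M *ᵥ h = h) :
    Mᵀ *ᵥ (G *ᵥ h) = G *ᵥ h :=
  calc Mᵀ *ᵥ (G *ᵥ h) = Mᵀ *ᵥ (G *ᵥ (M *ᵥ h)) := by rw [hh]
    _ = (Mᵀ * G * M) *ᵥ h := by simp only [mulVec_mulVec, Matrix.mul_assoc]
    _ = G *ᵥ h := by rw [hM]

variable [DecidableEq ι]

theorem inv (hM : IsGramIsometry G M) (hdet : IsUnit M.det) : IsGramIsometry G M⁻¹ :=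
  calc (M⁻¹)ᵀ * G * M⁻¹ = (M⁻¹)ᵀ * (Mᵀ * G * M) * M⁻¹ := by rw [hM]
    _ = (M * M⁻¹)ᵀ * G * (M * M⁻¹) := by simp only [transpose_mul, Matrix.mul_assoc]
    _ = G := by rw [mul_nonsing_inv M hdet, transpose_one, Matrix.one_mul, Matrix.mul_one]

theorem isUnit_det (hG : IsLeftRegular G.det) (hM : IsGramIsometry G M) : IsUnit M.det := by
  refine .of_mul_eq_one M.det (hG ?_)
  calc G.det * (M.det * M.det) = (Mᵀ * G * M).det := by
        rw [det_mul, det_mul, det_transpose]; ring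
    _ = G.det * 1 := by rw [hM, mul_one]

theorem of_mul_right {B : Matrix ι ι R} (hB : IsLeftRegular B.det)
    (h : (M * B)ᵀ * G * (M * B) = Bᵀ * G * B) : IsGramIsometry G M := by
  have hBt : IsLeftRegular Bᵀ.det := by rwa [det_transpose]
  apply (isRegular_of_isLeftRegular_det hBt).left
  apply (isRegular_of_isLeftRegular_det hB).right
  simpa only [transpose_mul, Matrix.mul_assoc] using h

theorem existsUnique_mulVec_eq (hG : IsLeftRegular G.det) {h v w : ι → R}
    (hstab : ∀ Q, IsGramIsometry G Q → Q *ᵥ h = h → Q = 1)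
    (hv : ∃ P, IsGramIsometry G P ∧ P *ᵥ h = v) (hw : ∃ P, IsGramIsometry G P ∧ P *ᵥ h = w) :
    ∃! M, IsGramIsometry G M ∧ M *ᵥ w = v := by
  obtain ⟨P, hP, rfl⟩ := hv
  obtain ⟨S, hS, rfl⟩ := hw
  have hPdet := hP.isUnit_det hG
  have hSdet := hS.isUnit_det hG
  refine ⟨P * S⁻¹, ⟨hP.mul (hS.inv hSdet), ?_⟩, ?_⟩
  · rw [mulVec_mulVec, nonsing_inv_mul_cancel_right _ _ hSdet]
  · rintro N ⟨hN, hNw⟩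
    have hQ : P⁻¹ * (N * S) = 1 := by
      refine hstab _ ((hP.inv hPdet).mul (hN.mul hS)) ?_
      rw [← mulVec_mulVec, ← mulVec_mulVec, hNw, mulVec_mulVec, nonsing_inv_mul _ hPdet,
        one_mulVec]
    calc N = P * (P⁻¹ * (N * S)) * S⁻¹ := by
          rw [mul_nonsing_inv_cancel_left _ _ hPdet, mul_nonsing_inv_cancel_right _ _ hSdet]
      _ = P * S⁻¹ := by rw [hQ, Matrix.mul_one]

end IsGramIsometry

section OrthogonalFrame

variable {R : Type*} [CommRing R]

/-- The matrix with columns `ε u` and `v`, where `u` is the covector `G v` rotated by a right angle.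
For symmetric `G` the vector `u` is orthogonal to `v`; the scalar `ε` is a sign in applications. -/
def orthogonalFrame (G : Matrix (Fin 2) (Fin 2) R) (ε : R) (v : Fin 2 → R) :
    Matrix (Fin 2) (Fin 2) R :=
  !![ε * (G *ᵥ v) 1, v 0; -ε * (G *ᵥ v) 0, v 1]

variable (G : Matrix (Fin 2) (Fin 2) R) (ε : R) (v : Fin 2 → R)

theorem det_orthogonalFrame : (orthogonalFrame G ε v).det = ε * (v ⬝ᵥ G *ᵥ v) := by
  rw [orthogonalFrame, det_fin_two_of, dotProduct, Fin.sum_univ_two]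
  ring

theorem orthogonalFrame_mulVec : orthogonalFrame G ε v *ᵥ ![0, 1] = v := by
  ext i
  fin_cases i <;> simp [orthogonalFrame, mulVec, dotProduct]

variable {G}

theorem transpose_orthogonalFrame_mul_mul (hG : G.IsSymm) :
    (orthogonalFrame G ε v)ᵀ * G * orthogonalFrame G ε v =
      !![ε ^ 2 * G.det * (v ⬝ᵥ G *ᵥ v), 0; 0, v ⬝ᵥ G *ᵥ v] := by
  have hsymm : G 1 0 = G 0 1 := hG.apply 0 1
  ext i j
  fin_cases i <;> fin_cases j <;>
    simp [orthogonalFrame, mul_apply, mulVec, dotProduct, Fin.sum_univ_two, det_fin_two, hsymm] <;>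
    ring

variable {ε v} {M : Matrix (Fin 2) (Fin 2) R} {h : Fin 2 → R}

theorem isGramIsometry_of_mul_orthogonalFrame (hG : G.IsSymm)
    (hh : IsLeftRegular (h ⬝ᵥ G *ᵥ h)) (hv : v ⬝ᵥ G *ᵥ v = h ⬝ᵥ G *ᵥ h) (hε : ε ^ 2 = 1)
    (hM : M * orthogonalFrame G 1 h = orthogonalFrame G ε v) : IsGramIsometry G M := by
  apply IsGramIsometry.of_mul_right (B := orthogonalFrame G 1 h)
  · rwa [det_orthogonalFrame, one_mul]
  · rw [hM, transpose_orthogonalFrame_mul_mul ε v hG, transpose_orthogonalFrame_mul_mul 1 h hG, hv,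
      hε, one_pow]

theorem mulVec_eq_of_mul_orthogonalFrame {η : R}
    (hM : M * orthogonalFrame G η h = orthogonalFrame G ε v) : M *ᵥ h = v := by
  rw [← orthogonalFrame_mulVec G η h, mulVec_mulVec, hM, orthogonalFrame_mulVec]

end OrthogonalFrame

/-- The Gram matrix of the lattice `N⁸_d` in the basis `δ, (H + μδ)/8`. The parameter `n` stands for
`(1 - dμ²)/16`, so that the lower right entry needs no division. -/
def latticeGram (d μ n : ℤ) : Matrix (Fin 2) (Fin 2) ℤ :=
  !![-8 * d, -μ * d; -μ * d, 2 * n]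

/-- The coordinates of the polarization `H` of `N⁸_d` in the basis `δ, (H + μδ)/8`. -/
def polarization (μ : ℤ) : Fin 2 → ℤ :=
  ![-μ, 8]

section Lattice

variable {d μ n : ℤ}

theorem isSymm_latticeGram : (latticeGram d μ n).IsSymm := by
  ext i j
  fin_cases i <;> fin_cases j <;> rfl

theorem det_latticeGram (hn : d * μ ^ 2 + 16 * n = 1) : (latticeGram d μ n).det = -d := by
  rw [latticeGram, det_fin_two_of]
  linear_combination -d * hn

theorem latticeGram_mulVec (v : Fin 2 → ℤ) : latticeGram d μ n *ᵥ v =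
    ![-8 * d * v 0 - μ * d * v 1, -μ * d * v 0 + 2 * n * v 1] := by
  ext i
  fin_cases i <;> simp [latticeGram, mulVec, dotProduct, sub_eq_add_neg]

theorem latticeGram_mulVec_polarization (hn : d * μ ^ 2 + 16 * n = 1) :
    latticeGram d μ n *ᵥ polarization μ = ![0, 1] := by
  refine (latticeGram_mulVec _).trans (vec2_eq ?_ ?_) <;>
    simp only [polarization, cons_val_zero, cons_val_one]
  · ring
  · linear_combination hn

theorem polarization_dotProduct_self (hn : d * μ ^ 2 + 16 * n = 1) :
    polarization μ ⬝ᵥ latticeGram d μ n *ᵥ polarization μ = 8 := by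
  rw [latticeGram_mulVec_polarization hn]
  simp [polarization]

theorem ne_zero_of_mul_sq_add_eq_one (hn : d * μ ^ 2 + 16 * n = 1) : d ≠ 0 := by
  rintro rfl
  omega

theorem odd_of_mul_sq_add_eq_one (hn : d * μ ^ 2 + 16 * n = 1) : Odd μ := by
  have hodd : Odd (d * μ ^ 2) := ⟨-8 * n, by linear_combination hn⟩
  exact (Int.odd_pow' two_ne_zero).mp (Int.odd_mul.mp hodd).2

theorem eq_one_of_mulVec_polarization (hn : d * μ ^ 2 + 16 * n = 1)
    {Q : Matrix (Fin 2) (Fin 2) ℤ} (hQ : IsGramIsometry (latticeGram d μ n) Q)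
    (hfix : Q *ᵥ polarization μ = polarization μ) : Q = 1 := by
  have hrow : Qᵀ *ᵥ ![0, 1] = ![0, 1] := by
    simpa only [latticeGram_mulVec_polarization hn] using hQ.transpose_mulVec_gram_mulVec hfix
  have h10 : Q 1 0 = 0 := by simpa [mulVec, dotProduct] using congrFun hrow 0
  have h11 : Q 1 1 = 1 := by simpa [mulVec, dotProduct] using congrFun hrow 1
  have hfix0 : Q 0 0 * -μ + Q 0 1 * 8 = -μ := by
    simpa [polarization, mulVec, dotProduct] using congrFun hfix 0
  have hnorm : d * (Q 0 0 * Q 0 0) = d * 1 := by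
    have hQ00 := congrFun (congrFun hQ 0) 0
    simp only [latticeGram, mul_apply, Fin.sum_univ_two, transpose_apply, of_apply, cons_val',
      cons_val_zero, cons_val_one, cons_val_fin_one, h10] at hQ00
    linarith
  have hsq : Q 0 0 * Q 0 0 = 1 := mul_left_cancel₀ (ne_zero_of_mul_sq_add_eq_one hn) hnorm
  have h00 : Q 0 0 = 1 := by
    refine (mul_self_eq_one_iff.mp hsq).resolve_right fun hneg => ?_
    obtain ⟨k, rfl⟩ := odd_of_mul_sq_add_eq_one hn
    rw [hneg] at hfix0
    omega
  have h01 : Q 0 1 = 0 := by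
    rw [h00] at hfix0
    linarith
  ext i j
  fin_cases i <;> fin_cases j <;> simp [h00, h01, h10, h11]

variable {v : Fin 2 → ℤ}

theorem four_dvd_or_four_dvd_sub (hn : d * μ ^ 2 + 16 * n = 1) (hprim : IsCoprime (v 0) (v 1))
    (hnorm : v ⬝ᵥ latticeGram d μ n *ᵥ v = 8) : 4 ∣ v 1 ∨ 4 ∣ v 0 - μ * n * v 1 := by
  have hcop : IsCoprime (v 1) (v 0 - μ * n * v 1) := by
    rw [sub_eq_add_neg, ← neg_mul]
    exact hprim.symm.add_mul_right_right _
  have hhalf : -4 * d * v 0 ^ 2 - μ * d * v 0 * v 1 + n * v 1 ^ 2 = 4 := by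
    simp only [latticeGram_mulVec, dotProduct, Fin.sum_univ_two, cons_val_zero,
      cons_val_one] at hnorm
    linarith
  have hdvd : (2 : ℤ) ^ 2 ∣ v 1 * (v 0 - μ * n * v 1) :=
    ⟨-μ * d * v 0 ^ 2 - μ + 4 * n * v 0 * v 1, by
      linear_combination -μ * hhalf - v 0 * v 1 * hn⟩
  simpa using pow_dvd_or_pow_dvd_of_isCoprime Int.prime_two hcop hdvd

theorem exists_mul_orthogonalFrame_polarization (hn : d * μ ^ 2 + 16 * n = 1) {ε : ℤ}
    (h0 : 8 ∣ v 0 + ε * μ * (latticeGram d μ n *ᵥ v) 1)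
    (h1 : 8 ∣ v 1 - ε * μ * (latticeGram d μ n *ᵥ v) 0) :
    ∃ M, M * orthogonalFrame (latticeGram d μ n) 1 (polarization μ) =
      orthogonalFrame (latticeGram d μ n) ε v := by
  rw [orthogonalFrame, orthogonalFrame, latticeGram_mulVec_polarization hn]
  generalize latticeGram d μ n *ᵥ v = g at h0 h1 ⊢
  obtain ⟨x, hx⟩ := h0
  obtain ⟨y, hy⟩ := h1
  refine ⟨!![ε * g 1, x; -ε * g 0, y], ?_⟩
  rw [mul_fin_two]
  refine congrArg of (vec2_eq (vec2_eq ?_ ?_) (vec2_eq ?_ ?_)) <;>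
    simp only [polarization, cons_val_zero, cons_val_one]
  · ring
  · linear_combination -hx
  · ring
  · linear_combination -hy

theorem exists_sign_dvd (hn : d * μ ^ 2 + 16 * n = 1) (hprim : IsCoprime (v 0) (v 1))
    (hnorm : v ⬝ᵥ latticeGram d μ n *ᵥ v = 8) :
    ∃ ε : ℤ, ε ^ 2 = 1 ∧ 8 ∣ v 0 + ε * μ * (latticeGram d μ n *ᵥ v) 1 ∧
      8 ∣ v 1 - ε * μ * (latticeGram d μ n *ᵥ v) 0 := by
  simp only [latticeGram_mulVec, cons_val_zero, cons_val_one]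
  rcases four_dvd_or_four_dvd_sub hn hprim hnorm with ⟨k, hk⟩ | ⟨k, hk⟩
  · refine ⟨1, one_pow 2, ⟨2 * n * v 0 + μ * n * k, ?_⟩, ⟨k + μ * d * v 0 - 2 * n * v 1, ?_⟩⟩
    · linear_combination 2 * μ * n * hk - v 0 * hn
    · linear_combination 2 * hk + v 1 * hn
  · refine ⟨-1, neg_one_sq, ⟨k - 2 * n * v 0, ?_⟩, ⟨2 * n * v 1 - μ * d * v 0, ?_⟩⟩
    · linear_combination 2 * hk + v 0 * hn
    · linear_combination -v 1 * hn

theorem exists_isGramIsometry_mulVec_polarization (hn : d * μ ^ 2 + 16 * n = 1)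
    (hprim : IsCoprime (v 0) (v 1)) (hnorm : v ⬝ᵥ latticeGram d μ n *ᵥ v = 8) :
    ∃ P, IsGramIsometry (latticeGram d μ n) P ∧ P *ᵥ polarization μ = v := by
  obtain ⟨ε, hε, h0, h1⟩ := exists_sign_dvd hn hprim hnorm
  obtain ⟨P, hP⟩ := exists_mul_orthogonalFrame_polarization hn h0 h1
  have hH := polarization_dotProduct_self hn
  have hreg : IsLeftRegular (polarization μ ⬝ᵥ latticeGram d μ n *ᵥ polarization μ) := by
    rw [hH]
    exact (IsRegular.of_ne_zero (by norm_num)).left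
  exact ⟨P, isGramIsometry_of_mul_orthogonalFrame isSymm_latticeGram hreg (hnorm.trans hH.symm)
    hε hP, mulVec_eq_of_mul_orthogonalFrame hP⟩

theorem sixteen_dvd_one_sub_mul_sq (hd : d % 8 = 1) (hμ1 : d % 16 = 1 → μ = 1)
    (hμ9 : d % 16 = 9 → μ = 3) : 16 ∣ 1 - d * μ ^ 2 := by
  obtain h | h : d % 16 = 1 ∨ d % 16 = 9 := by omega
  · rw [hμ1 h]
    omega
  · rw [hμ9 h]
    omega

end Lattice

theorem stmt_18_general (d μ : ℤ) (hdμ : 16 ∣ 1 - d * μ ^ 2) :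
    ∀ v w : Fin 2 → ℤ, IsCoprime (v 0) (v 1) → IsCoprime (w 0) (w 1) →
      v ⬝ᵥ (!![-8 * d, -μ * d; -μ * d, (1 - d * μ ^ 2) / 8] :
        Matrix (Fin 2) (Fin 2) ℤ).mulVec v = 8 →
      w ⬝ᵥ (!![-8 * d, -μ * d; -μ * d, (1 - d * μ ^ 2) / 8] :
        Matrix (Fin 2) (Fin 2) ℤ).mulVec w = 8 →
      ∃! M : Matrix (Fin 2) (Fin 2) ℤ,
        Mᵀ * !![-8 * d, -μ * d; -μ * d, (1 - d * μ ^ 2) / 8] * M =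
          !![-8 * d, -μ * d; -μ * d, (1 - d * μ ^ 2) / 8] ∧
        M.mulVec w = v := by
  obtain ⟨n, hdn⟩ := hdμ
  have hn : d * μ ^ 2 + 16 * n = 1 := by linear_combination -hdn
  have hdiv : (1 - d * μ ^ 2) / 8 = 2 * n := by omega
  rw [hdiv]
  intro v w hv hw hv8 hw8
  have hdet : IsLeftRegular (latticeGram d μ n).det := by
    rw [det_latticeGram hn]
    exact (IsRegular.of_ne_zero (neg_ne_zero.mpr (ne_zero_of_mul_sq_add_eq_one hn))).left
  exact IsGramIsometry.existsUnique_mulVec_eq hdet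
    (fun _ => eq_one_of_mulVec_polarization hn)
    (exists_isGramIsometry_mulVec_polarization hn hv hv8)
    (exists_isGramIsometry_mulVec_polarization hn hw hw8)

/-- Proposition 3.1.1: in the even hyperbolic lattice `N⁸_d` of determinant `-d`
(Gram matrix `!![-8d, -μd; -μd, (1-dμ²)/8]`), for any two primitive vectors of
square `8` there exists a unique isometry of the lattice taking one to the other. -/
theorem stmt_18 (d : ℤ) (hd : 0 < d) (hd8 : d % 8 = 1) (μ : ℤ)
    (hμ1 : d % 16 = 1 → μ = 1) (hμ9 : d % 16 = 9 → μ = 3) :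
    ∀ v w : Fin 2 → ℤ, IsCoprime (v 0) (v 1) → IsCoprime (w 0) (w 1) →
      v ⬝ᵥ (!![-8 * d, -μ * d; -μ * d, (1 - d * μ ^ 2) / 8] :
        Matrix (Fin 2) (Fin 2) ℤ).mulVec v = 8 →
      w ⬝ᵥ (!![-8 * d, -μ * d; -μ * d, (1 - d * μ ^ 2) / 8] :
        Matrix (Fin 2) (Fin 2) ℤ).mulVec w = 8 →
      ∃! M : Matrix (Fin 2) (Fin 2) ℤ,
        Mᵀ * !![-8 * d, -μ * d; -μ * d, (1 - d * μ ^ 2) / 8] * M =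
          !![-8 * d, -μ * d; -μ * d, (1 - d * μ ^ 2) / 8] ∧
        M.mulVec w = v :=
  stmt_18_general d μ (sixteen_dvd_one_sub_mul_sq hd8 hμ1 hμ9)
end
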